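/- arXiv:2104.14523 — 2 statements merged into one kernel-verified Lean document; each statement's English description precedes it below -/
import Mathlib

section
/- Let n > 3 be an integer and a, b, c ∈ ℂ with abc ≠ 0. Set e₁ = -((n-1)b)/((n-2)a) and e₂ = (nc)/((n-2)a). Then the discriminant of f(x) = xⁿ + ax² + bx + c equals (-1)^{n(n-1)/2} · n^{-1} · (n-2)^{n-1} · a^{n-1} · [ n²e₂^{n-1} + 4a²e₂ + 2abe₁ + b² + (1+(-1)^{n-1})·b·n·((e₁/2)² - e₂)^{(n-1)/2} + n·Σ_{i=0}^{⌊(n-2)/2⌋} (4ae₂ + ((n-1)/(n-1-2i))·be₁) · C(n-2, 2i) · (e₁/2)^{n-2-2i} · ((e₁/2)² - e₂)^{i} ], where the term with exponent (n-1)/2 is present only when n is odd (for n even its coefficient 1+(-1)^{n-1} vanishes, and for n odd the exponent (n-1)/2 is an integer). -/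
open Polynomial Finset

/-!
For `f = x ^ n + a x ^ 2 + b x + c` the operator `n f - x f'` kills the leading term and leaves the
quadratic `(n - 2) a q`, where `q = x ^ 2 - e₁ x + e₂`. Replacing `f` by `n f - x f'` in the
resultant of `f'` and `f`, and then dropping the formal degree of the second argument to `2`, gives
`n Res(f', f) = ((n - 2) a) ^ (n - 1) Res(f', q)`. If `q` has roots `h + d` and `h - d`, then
`Res(f', q) = f'(h + d) f'(h - d)`, in which only the even powers of `d` survive, and
`h = e₁ / 2`, `d ^ 2 = (e₁ / 2) ^ 2 - e₂`.
-/

section Discriminant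

lemma prod_filter_fst_lt_snd {ι M : Type*} [Fintype ι] [Preorder ι] [DecidableLT ι]
    [LocallyFiniteOrderTop ι] [CommMonoid M] (g : ι × ι → M) :
    ∏ p with p.1 < p.2, g p = ∏ i, ∏ j ∈ Ioi i, g (i, j) :=
  prod_finset_product _ _ _ (by simp)

lemma sum_card_Ioi_fin (n : ℕ) : ∑ i : Fin n, #(Ioi i) = n * (n - 1) / 2 := by
  simp only [Fin.card_Ioi]
  rw [Fin.sum_univ_eq_sum_range (fun i => n - 1 - i), sum_range_reflect (fun i => i),
    sum_range_id]

variable {R : Type*} [CommRing R]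

lemma prod_prod_compl_sub {n : ℕ} (ξ : Fin n → R) :
    ∏ i, ∏ j ∈ {i}ᶜ, (ξ i - ξ j)
      = (-1) ^ (n * (n - 1) / 2) * ∏ i, ∏ j ∈ Ioi i, (ξ i - ξ j) ^ 2 := by
  rw [← prod_prod_Ioi_mul_eq_prod_prod_off_diag (fun j i => ξ i - ξ j), ← sum_card_Ioi_fin,
    ← prod_pow_eq_pow_sum, ← prod_mul_distrib]
  refine prod_congr rfl fun i _ => ?_
  rw [← prod_const, ← prod_mul_distrib]
  exact prod_congr rfl fun j _ => by ring

lemma discr_eq_resultant_derivative {f : R[X]} (hf : f.Monic) {n : ℕ}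
    (hn : f.natDegree = n + 1) :
    f.discr = (-1) ^ ((n + 1) * n / 2) * resultant (derivative f) f n (n + 1) := by
  have hpos : 0 < f.degree := natDegree_pos_iff_degree_pos.mp (by omega)
  have h := resultant_deriv hpos
  rw [hn, hf.leadingCoeff, mul_one, Nat.add_sub_cancel, resultant_comm, mul_comm (n + 1) n,
    (Nat.even_mul_succ_self n).neg_one_pow, one_mul] at h
  rw [h, mul_comm (n + 1) n, ← mul_assoc, ← mul_pow, neg_one_mul, neg_neg, one_pow, one_mul]

theorem discr_prod_X_sub_C {n : ℕ} (ξ : Fin n → R) :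
    (∏ i, (X - C (ξ i))).discr = ∏ i, ∏ j ∈ Ioi i, (ξ i - ξ j) ^ 2 := by
  obtain _ | n := n
  · simpa using discr_C (1 : R)
  nontriviality R
  set f := ∏ i, (X - C (ξ i)) with hf
  have hmonic : f.Monic := monic_prod_X_sub_C ξ univ
  have hdeg : f.natDegree = n + 1 := by simp [hf]
  have hderiv : (derivative f).natDegree ≤ n := by
    simpa only [hdeg, Nat.add_sub_cancel] using natDegree_derivative_le f
  have heval (i) : (derivative f).eval (ξ i) = ∏ j ∈ {i}ᶜ, (ξ i - ξ j) := by
    rw [compl_singleton, ← Lagrange.eval_nodal]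
    exact Lagrange.eval_nodal_derivative_eval_node_eq (mem_univ i)
  have hres : resultant (derivative f) f n (n + 1) = ∏ i, ∏ j ∈ {i}ᶜ, (ξ i - ξ j) := by
    have h := resultant_prod_right univ _ (fun i => X - C (ξ i)) n hderiv (by simp)
    simpa only [← hf, hdeg, natDegree_X_sub_C, resultant_X_sub_C_right _ _ _ hderiv,
      prod_mul_distrib, prod_const, card_univ, Fintype.card_fin, ← pow_mul,
      (Nat.even_mul_succ_self n).neg_one_pow, one_mul, heval] using h
  rw [discr_eq_resultant_derivative hmonic hdeg, hres, prod_prod_compl_sub, Nat.add_sub_cancel,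
    ← mul_assoc, ← mul_pow, neg_one_mul, neg_neg, one_pow, one_mul]

end Discriminant

section Resultant

variable {R : Type*} [CommRing R]

lemma pow_mul_resultant_derivative_self {f q : R[X]} {n k j : ℕ} {u : R}
    (hf : f.natDegree ≤ n + 1) (hq : q.natDegree ≤ k) (hkj : k + j = n + 1)
    (heuler : (n + 1 : R[X]) * f - X * derivative f = C u * q) :
    (n + 1) ^ n * resultant (derivative f) f n (n + 1)
      = u ^ n * ((n + 1) * f.coeff (n + 1)) ^ j * resultant (derivative f) q n k := by
  have hderiv : (derivative f).natDegree ≤ n :=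
    (natDegree_derivative_le f).trans (Nat.sub_le_sub_right hf 1)
  have hX : (-X : R[X]).natDegree + n ≤ n + 1 := by
    rw [natDegree_neg, add_comm]
    exact Nat.add_le_add_left natDegree_X_le n
  have hsub : C (n + 1 : R) * f + derivative f * -X = C u * q := by
    rw [← heuler]
    simp only [map_add, map_natCast, map_one]
    ring
  calc (n + 1) ^ n * resultant (derivative f) f n (n + 1)
      = resultant (derivative f) (C (n + 1 : R) * f) n (n + 1) := (resultant_C_mul_right ..).symm
    _ = resultant (derivative f) (C u * q) n (n + 1) := by
      rw [← resultant_add_mul_right _ _ _ _ _ hX hderiv, hsub]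
    _ = u ^ n * resultant (derivative f) q n (k + j) := by rw [resultant_C_mul_right, hkj]
    _ = u ^ n * ((n + 1) * f.coeff (n + 1)) ^ j * resultant (derivative f) q n k := by
      rw [resultant_add_right_deg _ _ _ _ _ hq, coeff_derivative]
      ring

lemma resultant_X_sub_C_mul_X_sub_C_right (f : R[X]) (r s : R) {n : ℕ} (hf : f.natDegree ≤ n) :
    resultant f ((X - C r) * (X - C s)) n 2 = f.eval r * f.eval s := by
  nontriviality R
  have h := resultant_mul_right f (X - C r) (X - C s) n hf
  rw [natDegree_X_sub_C, natDegree_X_sub_C, one_add_one_eq_two,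
    resultant_X_sub_C_right _ _ _ hf, resultant_X_sub_C_right _ _ _ hf] at h
  rw [h, mul_mul_mul_comm, ← mul_pow, neg_one_mul, neg_neg, one_pow, one_mul]

end Resultant

section EvenPowers

lemma sum_range_succ_eq_sum_even_of_odd {M : Type*} [AddCommMonoid M] (g : ℕ → M)
    (hg : ∀ k, Odd k → g k = 0) (m : ℕ) :
    ∑ k ∈ range (m + 1), g k = ∑ i ∈ range (m / 2 + 1), g (2 * i) := by
  induction m with
  | zero => simp
  | succ m ih =>
    rw [sum_range_succ, ih]
    obtain ⟨p, rfl | rfl⟩ := m.even_or_odd'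
    · rw [hg _ (odd_two_mul_add_one p), add_zero, show (2 * p + 1) / 2 = 2 * p / 2 by omega]
    · rw [show (2 * p + 1 + 1) / 2 = (2 * p + 1) / 2 + 1 by omega, sum_range_succ _ (_ + 1),
        show 2 * ((2 * p + 1) / 2 + 1) = 2 * p + 1 + 1 by omega]

lemma add_pow_add_sub_pow {R : Type*} [CommRing R] (h d : R) (m : ℕ) :
    (h + d) ^ m + (h - d) ^ m
      = 2 * ∑ i ∈ range (m / 2 + 1), (m.choose (2 * i) : R) * h ^ (m - 2 * i) * (d ^ 2) ^ i := by
  rw [add_comm h d, sub_eq_neg_add, add_pow, add_pow, ← sum_add_distrib,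
    sum_range_succ_eq_sum_even_of_odd, mul_sum]
  · refine sum_congr rfl fun i _ => ?_
    rw [(even_two_mul i).neg_pow, pow_mul]
    ring
  · intro k hk
    rw [hk.neg_pow]
    ring

variable {K : Type*} [Field K] [CharZero K]

lemma cast_choose_succ_left {m k : ℕ} (hk : k ≤ m) :
    ((m + 1).choose k : K) = (m + 1) / (m + 1 - k) * m.choose k := by
  have hne : (m + 1 - k : K) ≠ 0 := by
    rw [← Nat.cast_add_one, sub_ne_zero]
    exact_mod_cast (Nat.lt_succ_of_le hk).ne'
  have hchoose := congrArg (Nat.cast (R := K)) (Nat.choose_mul_succ_eq m k)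
  push_cast [Nat.cast_sub (Nat.le_succ_of_le hk)] at hchoose
  rw [div_mul_eq_mul_div, eq_div_iff hne, ← hchoose, mul_comm]

lemma add_pow_succ_add_sub_pow_succ (h d : K) (m : ℕ) :
    (h + d) ^ (m + 1) + (h - d) ^ (m + 1)
      = (1 + (-1) ^ (m + 1)) * (d ^ 2) ^ ((m + 1) / 2)
        + 2 * h * ∑ i ∈ range (m / 2 + 1), ((m : K) + 1) / (m + 1 - 2 * i)
            * m.choose (2 * i) * h ^ (m - 2 * i) * (d ^ 2) ^ i := by
  have hlow : ∑ i ∈ range (m / 2 + 1),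
        ((m + 1).choose (2 * i) : K) * h ^ (m + 1 - 2 * i) * (d ^ 2) ^ i
      = h * ∑ i ∈ range (m / 2 + 1), ((m : K) + 1) / (m + 1 - 2 * i)
          * m.choose (2 * i) * h ^ (m - 2 * i) * (d ^ 2) ^ i := by
    rw [mul_sum]
    refine sum_congr rfl fun i hi => ?_
    have hle : 2 * i ≤ m := by
      rw [mem_range] at hi
      omega
    rw [cast_choose_succ_left hle, Nat.sub_add_comm hle, pow_succ]
    push_cast
    ring
  rw [add_pow_add_sub_pow, mul_assoc 2 h, ← hlow]
  obtain ⟨p, rfl | rfl⟩ := m.even_or_odd'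
  · rw [(odd_two_mul_add_one p).neg_one_pow, show (2 * p + 1) / 2 = 2 * p / 2 by omega]
    ring
  · rw [show 2 * p + 1 + 1 = 2 * (p + 1) by ring, (even_two_mul (p + 1)).neg_one_pow,
      show (2 * p + 1) / 2 = p by omega, Nat.mul_div_cancel_left _ two_pos,
      sum_range_succ _ (p + 1), Nat.choose_self, Nat.sub_self]
    push_cast
    ring

end EvenPowers

section Quadrinomial

variable {R : Type*} [CommRing R]

lemma degree_quadratic_lt_natCast {n : ℕ} (hn : 2 < n) (a b c : R) :
    (C a * X ^ 2 + C b * X + C c).degree < (n : WithBot ℕ) :=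
  degree_quadratic_le.trans_lt (Nat.cast_lt.mpr hn)

lemma monic_quadrinomial {n : ℕ} (hn : 2 < n) (a b c : R) :
    (X ^ n + C a * X ^ 2 + C b * X + C c).Monic := by
  simpa only [add_assoc] using monic_X_pow_add (degree_quadratic_lt_natCast hn a b c)

lemma natDegree_quadrinomial [Nontrivial R] {n : ℕ} (hn : 2 < n) (a b c : R) :
    (X ^ n + C a * X ^ 2 + C b * X + C c).natDegree = n := by
  rw [add_assoc, add_assoc, ← add_assoc (C a * X ^ 2), natDegree_add_eq_left_of_degree_lt,
    natDegree_X_pow]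
  simpa only [degree_X_pow] using degree_quadratic_lt_natCast hn a b c

lemma mul_discr_quadrinomial [IsDomain R] {m : ℕ} (hm : 0 < m) (hn : (m + 2 : R) ≠ 0)
    {a b c e₁ e₂ : R} (hb : (m + 1) * b = -(m * a * e₁)) (hc : (m + 2) * c = m * a * e₂) :
    (m + 2) * (X ^ (m + 2) + C a * X ^ 2 + C b * X + C c).discr
      = (-1) ^ ((m + 2) * (m + 1) / 2) * (m * a) ^ (m + 1)
        * resultant (derivative (X ^ (m + 2) + C a * X ^ 2 + C b * X + C c))
            (X ^ 2 - C e₁ * X + C e₂) (m + 1) 2 := by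
  set f := X ^ (m + 2) + C a * X ^ 2 + C b * X + C c with hf
  have hmonic : f.Monic := monic_quadrinomial (by omega) a b c
  have hdeg : f.natDegree = m + 2 := natDegree_quadrinomial (by omega) a b c
  have heuler : ((m + 1 : ℕ) + 1 : R[X]) * f - X * derivative f
      = C (m * a) * (X ^ 2 - C e₁ * X + C e₂) := by
    have hbC := congrArg C hb
    have hcC := congrArg C hc
    simp only [map_mul, map_add, map_neg, map_natCast, map_one, map_ofNat] at hbC hcC ⊢
    simp only [hf, derivative_add, derivative_X_pow, derivative_C_mul, derivative_C, derivative_X,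
      map_natCast]
    push_cast
    linear_combination X * hbC + hcC
  have hcoeff : f.coeff (m + 1 + 1) = 1 := by rw [← hmonic.coeff_natDegree, hdeg]
  have h := pow_mul_resultant_derivative_self hdeg.le (by compute_degree) (add_comm 2 m) heuler
  rw [hcoeff] at h
  rw [discr_eq_resultant_derivative hmonic hdeg]
  apply mul_left_cancel₀ (pow_ne_zero m hn)
  push_cast [add_assoc, one_add_one_eq_two] at h ⊢
  linear_combination (-1) ^ ((m + 2) * (m + 1) / 2) * h

variable {K : Type*} [Field K] [CharZero K]

lemma trinomial_add_mul_trinomial_sub (m : ℕ) (a b h d : K) :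
    ((m + 2) * (h + d) ^ (m + 1) + 2 * a * (h + d) + b)
      * ((m + 2) * (h - d) ^ (m + 1) + 2 * a * (h - d) + b)
      = ((m : K) + 2) ^ 2 * (h ^ 2 - d ^ 2) ^ (m + 1) + 4 * a ^ 2 * (h ^ 2 - d ^ 2)
        + 2 * a * b * (2 * h) + b ^ 2
        + (1 + (-1) ^ (m + 1)) * b * (m + 2) * (d ^ 2) ^ ((m + 1) / 2)
        + (m + 2) * ∑ i ∈ range (m / 2 + 1),
            (4 * a * (h ^ 2 - d ^ 2) + ((m : K) + 1) / (m + 1 - 2 * i) * b * (2 * h))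
              * m.choose (2 * i) * h ^ (m - 2 * i) * (d ^ 2) ^ i := by
  have hsum : ∑ i ∈ range (m / 2 + 1),
        (4 * a * (h ^ 2 - d ^ 2) + ((m : K) + 1) / (m + 1 - 2 * i) * b * (2 * h))
          * m.choose (2 * i) * h ^ (m - 2 * i) * (d ^ 2) ^ i
      = 2 * a * (h ^ 2 - d ^ 2) * ((h + d) ^ m + (h - d) ^ m)
        + b * ((h + d) ^ (m + 1) + (h - d) ^ (m + 1)
          - (1 + (-1) ^ (m + 1)) * (d ^ 2) ^ ((m + 1) / 2)) := by
    rw [add_pow_succ_add_sub_pow_succ, add_sub_cancel_left, add_pow_add_sub_pow]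
    simp only [mul_sum, ← sum_add_distrib]
    exact sum_congr rfl fun i _ => by ring
  have hprod : (h + d) ^ (m + 1) * (h - d) ^ (m + 1) = (h ^ 2 - d ^ 2) ^ (m + 1) := by
    rw [← mul_pow, sq_sub_sq]
  rw [hsum]
  linear_combination (m + 2 : K) ^ 2 * hprod

lemma resultant_derivative_quadrinomial (m : ℕ) (a b c e₁ e₂ : K) :
    resultant (derivative (X ^ (m + 2) + C a * X ^ 2 + C b * X + C c)) (X ^ 2 - C e₁ * X + C e₂)
        (m + 1) 2
      = ((m : K) + 2) ^ 2 * e₂ ^ (m + 1) + 4 * a ^ 2 * e₂ + 2 * a * b * e₁ + b ^ 2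
        + (1 + (-1) ^ (m + 1)) * b * (m + 2) * ((e₁ / 2) ^ 2 - e₂) ^ ((m + 1) / 2)
        + (m + 2) * ∑ i ∈ range (m / 2 + 1),
            (4 * a * e₂ + ((m : K) + 1) / (m + 1 - 2 * i) * b * e₁)
              * m.choose (2 * i) * (e₁ / 2) ^ (m - 2 * i) * ((e₁ / 2) ^ 2 - e₂) ^ i := by
  let φ := algebraMap K (AlgebraicClosure K)
  obtain ⟨d, hd⟩ := IsAlgClosed.exists_pow_nat_eq ((φ e₁ / 2) ^ 2 - φ e₂) two_pos
  have he₁ : 2 * (φ e₁ / 2) = φ e₁ := mul_div_cancel₀ _ two_ne_zero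
  have he₂ : (φ e₁ / 2) ^ 2 - d ^ 2 = φ e₂ := by rw [hd, sub_sub_cancel]
  have hfactor : X ^ 2 - C (φ e₁) * X + C (φ e₂)
      = (X - C (φ e₁ / 2 + d)) * (X - C (φ e₁ / 2 - d)) := by
    conv_lhs => rw [← he₁, ← he₂]
    simp only [map_add, map_sub, map_mul, map_pow, map_ofNat]
    ring
  have hmapf : (X ^ (m + 2) + C a * X ^ 2 + C b * X + C c).map φ
      = X ^ (m + 2) + C (φ a) * X ^ 2 + C (φ b) * X + C (φ c) := by simp
  have hmapq : (X ^ 2 - C e₁ * X + C e₂).map φ = X ^ 2 - C (φ e₁) * X + C (φ e₂) := by simp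
  have hdeg : (X ^ (m + 2) + C (φ a) * X ^ 2 + C (φ b) * X + C (φ c)).natDegree ≤ m + 2 := by
    compute_degree!
  have hderiv : (derivative (X ^ (m + 2) + C (φ a) * X ^ 2 + C (φ b) * X + C (φ c))).natDegree
      ≤ m + 1 := (natDegree_derivative_le _).trans (Nat.sub_le_sub_right hdeg 1)
  have heval : ∀ x, (derivative (X ^ (m + 2) + C (φ a) * X ^ 2 + C (φ b) * X + C (φ c))).eval x
      = (m + 2) * x ^ (m + 1) + 2 * φ a * x + φ b := by
    intro x
    simp only [derivative_add, derivative_X_pow, derivative_C_mul, derivative_C, derivative_X,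
      map_natCast, eval_add, eval_mul, eval_natCast, eval_pow, eval_X, eval_C, eval_one, eval_zero]
    push_cast
    ring
  have hexp := trinomial_add_mul_trinomial_sub m (φ a) (φ b) (φ e₁ / 2) d
  rw [he₁, he₂, hd] at hexp
  apply φ.injective
  rw [← resultant_map_map, ← derivative_map, hmapf, hmapq, hfactor,
    resultant_X_sub_C_mul_X_sub_C_right _ _ _ hderiv, heval, heval, hexp]
  simp only [map_add, map_sub, map_mul, map_pow, map_div₀, map_sum, map_neg, map_one, map_natCast,
    map_ofNat]

end Quadrinomial

theorem discriminant_quadrinomial_x_pow_n_add_ax_sq_general {K : Type*} [Field K] [CharZero K]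
    {n : ℕ} (hn : 2 < n) {a b c : K} (ha : a ≠ 0) {e₁ e₂ : K}
    (he₁ : e₁ = -(((n : K) - 1) * b) / (((n : K) - 2) * a))
    (he₂ : e₂ = (n : K) * c / (((n : K) - 2) * a)) :
    (X ^ n + C a * X ^ 2 + C b * X + C c).discr
      = (-1) ^ (n * (n - 1) / 2) * (n : K)⁻¹ * ((n : K) - 2) ^ (n - 1) * a ^ (n - 1)
          * ((n : K) ^ 2 * e₂ ^ (n - 1) + 4 * a ^ 2 * e₂ + 2 * a * b * e₁ + b ^ 2
            + (1 + (-1) ^ (n - 1)) * b * n * ((e₁ / 2) ^ 2 - e₂) ^ ((n - 1) / 2)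
            + n * ∑ i ∈ range ((n - 2) / 2 + 1),
                (4 * a * e₂ + ((n : K) - 1) / (n - 1 - 2 * i) * b * e₁)
                  * (n - 2).choose (2 * i) * (e₁ / 2) ^ (n - 2 - 2 * i)
                  * ((e₁ / 2) ^ 2 - e₂) ^ i) := by
  obtain ⟨m, rfl⟩ : ∃ m, n = m + 2 := ⟨n - 2, by omega⟩
  have hm : 0 < m := by omega
  have hm0 : (m : K) ≠ 0 := Nat.cast_ne_zero.mpr hm.ne'
  have hn0 : (m + 2 : K) ≠ 0 := by exact_mod_cast (m + 1).succ_ne_zero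
  have hcast₁ : ((m + 2 : ℕ) : K) - 1 = m + 1 := by push_cast; ring
  have hcast₂ : ((m + 2 : ℕ) : K) - 2 = m := by push_cast; ring
  have hb : (m + 1) * b = -(m * a * e₁) := by
    rw [he₁, hcast₁, hcast₂]
    field_simp
  have hc : (m + 2) * c = m * a * e₂ := by
    rw [he₂, hcast₂]
    push_cast
    field_simp
  have h := mul_discr_quadrinomial hm hn0 hb hc
  rw [resultant_derivative_quadrinomial] at h
  rw [hcast₁, hcast₂, Nat.add_sub_cancel, show m + 2 - 1 = m + 1 by rfl,
    (eq_inv_mul_iff_mul_eq₀ hn0).mpr h, mul_pow]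
  push_cast
  ring

/-- **Discriminant of `x^n + a x^2 + b x + c`** (Theorem 3.1).
For a monic polynomial `f` over `ℂ` with roots `ξ₁, …, ξ_n` (with multiplicity),
the discriminant is `∏_{i<j} (ξ i - ξ j)^2`. -/
theorem discriminant_quadrinomial_x_pow_n_add_ax_sq
    (n : ℕ) (hn : 3 < n) (a b c : ℂ) (habc : a * b * c ≠ 0)
    (e₁ e₂ : ℂ)
    (he₁ : e₁ = -(((n : ℂ) - 1) * b) / (((n : ℂ) - 2) * a))
    (he₂ : e₂ = (n : ℂ) * c / (((n : ℂ) - 2) * a))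
    (ξ : Fin n → ℂ)
    (hf : (X ^ n + C a * X ^ 2 + C b * X + C c : ℂ[X])
        = ∏ i : Fin n, (X - C (ξ i))) :
    (∏ p ∈ Finset.univ.filter (fun p : Fin n × Fin n => p.1 < p.2),
        (ξ p.1 - ξ p.2) ^ 2)
      = (-1 : ℂ) ^ (n * (n - 1) / 2) * (n : ℂ)⁻¹ * ((n : ℂ) - 2) ^ (n - 1)
          * a ^ (n - 1)
          * ((n : ℂ) ^ 2 * e₂ ^ (n - 1) + 4 * a ^ 2 * e₂ + 2 * a * b * e₁ + b ^ 2
            + (1 + (-1 : ℂ) ^ (n - 1)) * b * (n : ℂ)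
                * ((e₁ / 2) ^ 2 - e₂) ^ ((n - 1) / 2)
            + (n : ℂ) * ∑ i ∈ Finset.range ((n - 2) / 2 + 1),
                (4 * a * e₂ + ((n : ℂ) - 1) / ((n : ℂ) - 1 - 2 * (i : ℂ)) * b * e₁)
                  * (Nat.choose (n - 2) (2 * i) : ℂ)
                  * (e₁ / 2) ^ (n - 2 - 2 * i)
                  * ((e₁ / 2) ^ 2 - e₂) ^ i) := by
  rw [prod_filter_fst_lt_snd, ← discr_prod_X_sub_C, ← hf]
  exact discriminant_quadrinomial_x_pow_n_add_ax_sq_general (by omega)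
    (left_ne_zero_of_mul (left_ne_zero_of_mul habc)) he₁ he₂
end

section
/- Let n > 3 be an integer and a, b, c ∈ ℂ with abc ≠ 0. Set e₁ = -((n-1)a)/((n-2)b) and e₂ = n/((n-2)b). Then the discriminant of f(x) = xⁿ + ax^{n-1} + bx^{n-2} + c equals (-1)^{n(n-1)/2} · n^{-1} · ((n-2)bc)^{n-1} · [ n²e₂^{n-1} + (4b²e₂ + 2abe₁ + a²)/c² + (1+(-1)^{n-1})·(an/c)·((e₁/2)² - e₂)^{(n-1)/2} + (n/c)·Σ_{i=0}^{⌊(n-2)/2⌋} (4be₂ + ((n-1)/(n-1-2i))·ae₁) · C(n-2, 2i) · (e₁/2)^{n-2-2i} · ((e₁/2)² - e₂)^{i} ], where the term with exponent (n-1)/2 is present only when n is odd (for n even its coefficient 1+(-1)^{n-1} vanishes). -/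
open Polynomial Finset

/-!
If `u` and `v` are the reciprocals of the nonzero critical points of
`f = x ^ n + a x ^ (n - 1) + b x ^ (n - 2) + c`, then
`f' = (n - 2) b x ^ (n - 3) (1 - u x) (1 - v x)`, so the product of `f'` over the roots of `f` is a
power of `c` times `g(u) g(v)`, where `g = 1 + a x + b x ^ 2 + c x ^ n` is the reversal of `f`.
Moreover `n g(u) = u (a + 2 b u + n c u ^ (n - 1))`, which turns the discriminant into an expression
in `u v`, `u + v` and the power sums of `u` and `v` of exponents `n - 1` and `n - 2`. With
`u, v = p ± √d`, binomial expansion of these power sums leaves only even powers of `√d`.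
-/

section Roots

variable {R : Type*} [CommRing R]

lemma eval_derivative_prod_X_sub_C {ι : Type*} [Fintype ι] [DecidableEq ι] (ξ : ι → R) (i : ι) :
    (derivative (∏ j, (X - C (ξ j)))).eval (ξ i) = ∏ j ∈ {i}ᶜ, (ξ i - ξ j) := by
  simp [Fintype.prod_eq_mul_prod_compl i, eval_prod]

lemma prod_prod_Ioi_neg_one (n : ℕ) :
    ∏ i : Fin n, ∏ _j ∈ Ioi i, (-1 : R) = (-1) ^ (n * (n - 1) / 2) := by
  simp only [prod_const, Fin.card_Ioi]
  rw [prod_pow_eq_pow_sum, Fin.sum_univ_eq_sum_range (fun i => n - 1 - i),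
    sum_range_reflect (fun i => i), sum_range_id]

lemma prod_sq_sub_eq_prod_eval_derivative {n : ℕ} (ξ : Fin n → R) :
    ∏ p : Fin n × Fin n with p.1 < p.2, (ξ p.1 - ξ p.2) ^ 2
      = (-1) ^ (n * (n - 1) / 2) * ∏ i, (derivative (∏ j, (X - C (ξ j)))).eval (ξ i) := by
  simp only [eval_derivative_prod_X_sub_C]
  rw [← prod_prod_Ioi_mul_eq_prod_prod_off_diag (fun j i => ξ i - ξ j),
    ← prod_prod_Ioi_neg_one, ← prod_mul_distrib, prod_filter, Fintype.prod_prod_type]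
  refine prod_congr rfl fun i _ => ?_
  rw [← prod_mul_distrib, ← prod_filter]
  refine prod_congr (by ext; simp) fun j _ => ?_
  ring

lemma reflect_prod_X_sub_C {ι : Type*} (s : Finset ι) (ξ : ι → R) :
    reflect #s (∏ i ∈ s, (X - C (ξ i))) = ∏ i ∈ s, (1 - C (ξ i) * X) := by
  classical
  induction s using Finset.induction_on with
  | empty => simp
  | insert i s hi ih =>
    have hdeg : (∏ j ∈ s, (X - C (ξ j))).natDegree ≤ #s :=
      (natDegree_prod_le _ _).trans <|
        (sum_le_card_nsmul s _ 1 fun j _ => natDegree_X_sub_C_le (ξ j)).trans_eq (by simp)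
    rw [prod_insert hi, prod_insert hi, card_insert_of_notMem hi, add_comm,
      reflect_mul _ _ (natDegree_X_sub_C_le _) hdeg, ih, reflect_sub, reflect_one_X, reflect_C,
      pow_one]

end Roots

section Quadrinomial

variable {R : Type*} [CommRing R] {m : ℕ} {a b c u v : R} {ξ : Fin (m + 3) → R}

lemma prod_roots_quadrinomial
    (hf : X ^ (m + 3) + C a * X ^ (m + 2) + C b * X ^ (m + 1) + C c = ∏ i, (X - C (ξ i))) :
    ∏ i, ξ i = (-1) ^ (m + 3) * c := by
  have h : c = (-1) ^ (m + 3) * ∏ i, ξ i := by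
    simpa [eval_prod, prod_neg] using congrArg (eval 0) hf
  rw [h, ← mul_assoc, ← mul_pow]
  simp

lemma prod_one_sub_root_mul_quadrinomial
    (hf : X ^ (m + 3) + C a * X ^ (m + 2) + C b * X ^ (m + 1) + C c = ∏ i, (X - C (ξ i)))
    (x : R) :
    ∏ i, (1 - ξ i * x) = 1 + a * x + b * x ^ 2 + c * x ^ (m + 3) := by
  have h := reflect_prod_X_sub_C univ ξ
  rw [← hf, card_univ, Fintype.card_fin] at h
  simp only [reflect_add, reflect_C_mul, reflect_monomial, reflect_C] at h
  rw [revAt_le le_rfl, revAt_le (by lia), revAt_le (by lia), Nat.sub_self,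
    show m + 3 - (m + 2) = 1 by lia, show m + 3 - (m + 1) = 2 by lia] at h
  simpa [eval_prod] using (congrArg (eval x) h).symm

lemma eval_derivative_quadrinomial (hsum : ((m : R) + 1) * b * (u + v) = -((m + 2) * a))
    (hprod : ((m : R) + 1) * b * (u * v) = m + 3) (x : R) :
    (derivative (X ^ (m + 3) + C a * X ^ (m + 2) + C b * X ^ (m + 1) + C c)).eval x
      = x ^ m * ((m + 1) * b) * ((1 - x * u) * (1 - x * v)) := by
  simp only [derivative_add, derivative_C_mul, derivative_X_pow, derivative_C, eval_add,
    eval_mul, eval_pow, eval_X, eval_C, Nat.add_sub_cancel, eval_zero]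
  push_cast
  linear_combination x ^ (m + 1) * hsum - x ^ (m + 2) * hprod

lemma prod_eval_derivative_quadrinomial
    (hsum : ((m : R) + 1) * b * (u + v) = -((m + 2) * a))
    (hprod : ((m : R) + 1) * b * (u * v) = m + 3)
    (hf : X ^ (m + 3) + C a * X ^ (m + 2) + C b * X ^ (m + 1) + C c = ∏ i, (X - C (ξ i))) :
    ∏ i, (derivative (∏ j, (X - C (ξ j)))).eval (ξ i)
      = c ^ m * ((m + 1) * b) ^ (m + 3)
        * ((1 + a * u + b * u ^ 2 + c * u ^ (m + 3))
          * (1 + a * v + b * v ^ 2 + c * v ^ (m + 3))) := by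
  have hsign : ((-1 : R) ^ (m + 3)) ^ m = 1 := by
    rw [← pow_mul, Even.neg_one_pow (by grind)]
  rw [← hf]
  simp only [eval_derivative_quadrinomial hsum hprod, prod_mul_distrib, prod_pow,
    prod_roots_quadrinomial hf, prod_one_sub_root_mul_quadrinomial hf, Fin.prod_const, mul_pow,
    hsign, one_mul]

lemma mul_eval_reverse_quadrinomial (hsum : ((m : R) + 1) * b * (u + v) = -((m + 2) * a))
    (hprod : ((m : R) + 1) * b * (u * v) = m + 3) :
    (m + 3) * (1 + a * u + b * u ^ 2 + c * u ^ (m + 3))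
      = u * (a + 2 * b * u + (m + 3) * c * u ^ (m + 2)) := by
  linear_combination u * hsum - hprod

lemma mul_prod_eval_derivative_quadrinomial [IsDomain R] (hm : (m : R) + 3 ≠ 0)
    (hsum : ((m : R) + 1) * b * (u + v) = -((m + 2) * a))
    (hprod : ((m : R) + 1) * b * (u * v) = m + 3)
    (hf : X ^ (m + 3) + C a * X ^ (m + 2) + C b * X ^ (m + 1) + C c = ∏ i, (X - C (ξ i))) :
    (m + 3) * ∏ i, (derivative (∏ j, (X - C (ξ j)))).eval (ξ i)
      = c ^ m * ((m + 1) * b) ^ (m + 2)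
        * ((m + 3) ^ 2 * c ^ 2 * (u * v) ^ (m + 2)
          + (4 * b ^ 2 * (u * v) + 2 * a * b * (u + v) + a ^ 2)
          + (m + 3) * c * (a * (u ^ (m + 2) + v ^ (m + 2))
            + 2 * b * (u * v) * (u ^ (m + 1) + v ^ (m + 1)))) := by
  have hu := mul_eval_reverse_quadrinomial (c := c) hsum hprod
  have hv := mul_eval_reverse_quadrinomial (c := c) (add_comm u v ▸ hsum) (mul_comm u v ▸ hprod)
  rw [prod_eval_derivative_quadrinomial hsum hprod hf]
  refine mul_left_cancel₀ hm ?_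
  set B := ((m : R) + 1) * b
  calc
    _ = c ^ m * B ^ (m + 3)
        * (((m + 3) * (1 + a * u + b * u ^ 2 + c * u ^ (m + 3)))
          * ((m + 3) * (1 + a * v + b * v ^ 2 + c * v ^ (m + 3)))) := by ring
    _ = c ^ m * B ^ (m + 2) * (B * (u * v))
        * ((a + 2 * b * u + (m + 3) * c * u ^ (m + 2))
          * (a + 2 * b * v + (m + 3) * c * v ^ (m + 2))) := by rw [hu, hv]; ring
    _ = _ := by rw [hprod]; ring

end Quadrinomial

/-- Half the `k`-th power sum of the roots `p ± √d` of `x ^ 2 - 2 p x + (p ^ 2 - d)`, written as the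
even part of the binomial expansion of `(p + √d) ^ k` so that it makes sense in any semiring. -/
def evenBinomialSum {R : Type*} [Semiring R] (p d : R) (k : ℕ) : R :=
  ∑ i ∈ range (k / 2 + 1), (k.choose (2 * i) : R) * p ^ (k - 2 * i) * d ^ i

section EvenBinomialSum

lemma map_evenBinomialSum {R S : Type*} [Semiring R] [Semiring S] (φ : R →+* S) (p d : R) (k : ℕ) :
    φ (evenBinomialSum p d k) = evenBinomialSum (φ p) (φ d) k := by
  simp [evenBinomialSum]

lemma add_pow_add_sub_pow_s1 {R : Type*} [CommRing R] (p q : R) (k : ℕ) :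
    (p + q) ^ k + (p - q) ^ k = 2 * evenBinomialSum p (q ^ 2) k := by
  have hexpand : (p + q) ^ k + (p - q) ^ k
      = ∑ j ∈ range (k + 1), (1 + (-1) ^ j) * (q ^ j * p ^ (k - j) * (k.choose j : R)) := by
    rw [sub_eq_neg_add, add_comm p q, add_pow, add_pow, ← sum_add_distrib]
    refine sum_congr rfl fun j _ => ?_
    rw [neg_pow q]
    ring
  rw [hexpand, evenBinomialSum, mul_sum]
  symm
  refine sum_of_injOn (2 * ·) (fun x _ y _ h => by simpa using h) ?_ ?_ ?_
  · intro i hi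
    simp only [coe_range, Set.mem_Iio] at hi ⊢
    lia
  · intro j hj hj'
    have hodd : Odd j := by
      rw [← Nat.not_even_iff_odd]
      rintro ⟨i, rfl⟩
      refine hj' ⟨i, ?_, two_mul i⟩
      simp only [coe_range, Set.mem_Iio, mem_range] at hj ⊢
      lia
    simp [hodd.neg_one_pow]
  · intro i _
    simp only [pow_mul, neg_one_sq, one_pow]
    ring

lemma two_mul_evenBinomialSum_succ {R : Type*} [CommRing R] (p d : R) (k : ℕ) :
    2 * evenBinomialSum p d (k + 1)
      = (1 + (-1) ^ (k + 1)) * d ^ ((k + 1) / 2)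
        + 2 * p * ∑ i ∈ range (k / 2 + 1),
          ((k + 1).choose (2 * i) : R) * p ^ (k - 2 * i) * d ^ i := by
  have hfactor : ∑ i ∈ range (k / 2 + 1), ((k + 1).choose (2 * i) : R) * p ^ (k + 1 - 2 * i) * d ^ i
      = p * ∑ i ∈ range (k / 2 + 1), ((k + 1).choose (2 * i) : R) * p ^ (k - 2 * i) * d ^ i := by
    rw [mul_sum]
    refine sum_congr rfl fun i hi => ?_
    rw [show k + 1 - 2 * i = k - 2 * i + 1 by grind]
    ring
  rcases Nat.even_or_odd' k with ⟨j, rfl | rfl⟩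
  · rw [evenBinomialSum, show (2 * j + 1) / 2 = 2 * j / 2 by lia, hfactor,
      Odd.neg_one_pow ⟨j, rfl⟩]
    ring
  · rw [evenBinomialSum, show (2 * j + 1 + 1) / 2 = (2 * j + 1) / 2 + 1 by lia, sum_range_succ,
      hfactor, Even.neg_one_pow ⟨j + 1, by ring⟩,
      show 2 * ((2 * j + 1) / 2 + 1) = 2 * j + 1 + 1 by lia, Nat.choose_self, Nat.sub_self]
    simp only [Nat.cast_one, pow_zero]
    ring

variable {K : Type*} [Field K]

lemma cast_ne_zero_of_cast_factorial_ne_zero {n k : ℕ} (hn : (n.factorial : K) ≠ 0) (hk : 0 < k)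
    (hkn : k ≤ n) : (k : K) ≠ 0 :=
  ne_zero_of_dvd_ne_zero hn (Nat.cast_dvd_cast (Nat.dvd_factorial hk hkn))

lemma cast_choose_succ_eq_div_mul {k j : ℕ} (hjk : j ≤ k) (hne : (k : K) + 1 - j ≠ 0) :
    ((k + 1).choose j : K) = (k + 1) / (k + 1 - j) * k.choose j := by
  have h := congrArg (Nat.cast (R := K)) (Nat.choose_mul_succ_eq k j)
  rw [Nat.cast_mul, Nat.cast_mul, Nat.cast_sub (by lia)] at h
  push_cast at h
  field_simp
  linear_combination -h

lemma sum_choose_eq_evenBinomialSum {k : ℕ} (hk : ((k + 1).factorial : K) ≠ 0) (a B p d : K) :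
    ∑ i ∈ range (k / 2 + 1),
        (B + ((k : K) + 1) / (k + 1 - 2 * i) * a * (2 * p))
          * (k.choose (2 * i) : K) * p ^ (k - 2 * i) * d ^ i
      = a * (2 * evenBinomialSum p d (k + 1)) + B * evenBinomialSum p d k
        - (1 + (-1) ^ (k + 1)) * a * d ^ ((k + 1) / 2) := by
  have hchoose (i) (hi : i ∈ range (k / 2 + 1)) :
      ((k + 1).choose (2 * i) : K) = (k + 1) / (k + 1 - 2 * i) * k.choose (2 * i) := by
    have hik : 2 * i ≤ k := by grind
    have hne : (k : K) + 1 - (2 * i : ℕ) ≠ 0 := by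
      have h : ((k + 1 - 2 * i : ℕ) : K) ≠ 0 :=
        cast_ne_zero_of_cast_factorial_ne_zero hk (by lia) (by lia)
      rwa [Nat.cast_sub (by lia), Nat.cast_add_one] at h
    simpa using cast_choose_succ_eq_div_mul hik hne
  rw [two_mul_evenBinomialSum_succ, evenBinomialSum, mul_add, mul_sum, mul_sum, mul_sum,
    add_assoc, ← sum_add_distrib, mul_left_comm a, ← mul_assoc, add_sub_cancel_left]
  refine sum_congr rfl fun i hi => ?_
  rw [hchoose i hi]
  ring

end EvenBinomialSum

section Field

variable {K : Type*} [Field K] {m : ℕ} {a b c p d : K} {ξ : Fin (m + 3) → K}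

lemma mul_prod_eval_derivative_quadrinomial_eq_evenBinomialSum
    (hm : (m : K) + 3 ≠ 0) (hsum : ((m : K) + 1) * b * (2 * p) = -((m + 2) * a))
    (hprod : ((m : K) + 1) * b * (p ^ 2 - d) = m + 3)
    (hf : X ^ (m + 3) + C a * X ^ (m + 2) + C b * X ^ (m + 1) + C c = ∏ i, (X - C (ξ i))) :
    (m + 3) * ∏ i, (derivative (∏ j, (X - C (ξ j)))).eval (ξ i)
      = c ^ m * ((m + 1) * b) ^ (m + 2)
        * ((m + 3) ^ 2 * c ^ 2 * (p ^ 2 - d) ^ (m + 2)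
          + (4 * b ^ 2 * (p ^ 2 - d) + 2 * a * b * (2 * p) + a ^ 2)
          + (m + 3) * c * (a * (2 * evenBinomialSum p d (m + 2))
            + 2 * b * (p ^ 2 - d) * (2 * evenBinomialSum p d (m + 1)))) := by
  -- Both sides are defined over `K`, so `√d` may be taken in the algebraic closure.
  let φ := algebraMap K (AlgebraicClosure K)
  obtain ⟨q, hq⟩ := IsAlgClosed.exists_pow_nat_eq (φ d) two_pos
  have hadd : (φ p + q) + (φ p - q) = 2 * φ p := by ring
  have hmul : (φ p + q) * (φ p - q) = φ p ^ 2 - φ d := by rw [← hq]; ring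
  have hprodφ : ∏ j, (X - C (φ (ξ j))) = (∏ j, (X - C (ξ j))).map φ := by
    simp [Polynomial.map_prod]
  have hclosure := mul_prod_eval_derivative_quadrinomial (u := φ p + q) (v := φ p - q)
    (a := φ a) (b := φ b) (c := φ c) (ξ := fun i => φ (ξ i))
    (by simpa [map_ofNat] using (_root_.map_ne_zero φ).2 hm)
    (by simpa [hadd, map_ofNat] using congrArg φ hsum)
    (by simpa [hmul, map_ofNat] using congrArg φ hprod)
    (by rw [hprodφ, ← hf]; simp)
  rw [add_pow_add_sub_pow_s1, add_pow_add_sub_pow_s1, hadd, hmul, hq] at hclosure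
  apply φ.injective
  simpa [hprodφ, derivative_map, map_evenBinomialSum, map_ofNat] using hclosure

end Field

theorem discriminant_quadrinomial_x_pow_n_add_ax_pow_n_sub_one_add_bx_pow_n_sub_two_general
    {K : Type*} [Field K] (n : ℕ) (hn : 3 ≤ n) (hfac : (n.factorial : K) ≠ 0)
    (a b c : K) (hb : b ≠ 0) (hc : c ≠ 0) (e₁ e₂ : K)
    (he₁ : e₁ = -(((n : K) - 1) * a) / (((n : K) - 2) * b))
    (he₂ : e₂ = (n : K) / (((n : K) - 2) * b))
    (ξ : Fin n → K)
    (hf : X ^ n + C a * X ^ (n - 1) + C b * X ^ (n - 2) + C c = ∏ i, (X - C (ξ i))) :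
    ∏ p : Fin n × Fin n with p.1 < p.2, (ξ p.1 - ξ p.2) ^ 2
      = (-1) ^ (n * (n - 1) / 2) * (n : K)⁻¹ * (((n : K) - 2) * b * c) ^ (n - 1)
          * ((n : K) ^ 2 * e₂ ^ (n - 1)
            + (4 * b ^ 2 * e₂ + 2 * a * b * e₁ + a ^ 2) / c ^ 2
            + (1 + (-1) ^ (n - 1)) * (a * n / c) * ((e₁ / 2) ^ 2 - e₂) ^ ((n - 1) / 2)
            + (n / c) * ∑ i ∈ range ((n - 2) / 2 + 1),
                (4 * b * e₂ + ((n : K) - 1) / (n - 1 - 2 * i) * a * e₁)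
                  * ((n - 2).choose (2 * i) : K)
                  * (e₁ / 2) ^ (n - 2 - 2 * i) * ((e₁ / 2) ^ 2 - e₂) ^ i) := by
  obtain ⟨m, rfl⟩ : ∃ m, n = m + 3 := ⟨n - 3, by lia⟩
  have hne (k : ℕ) (hk : 0 < k) (hkm : k ≤ m + 3) : (k : K) ≠ 0 :=
    cast_ne_zero_of_cast_factorial_ne_zero hfac hk hkm
  have h2 : (2 : K) ≠ 0 := by simpa using hne 2 (by lia) (by lia)
  have hm1 : (m : K) + 1 ≠ 0 := by simpa using hne (m + 1) (by lia) (by lia)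
  have hm3 : (m : K) + 3 ≠ 0 := by simpa using hne (m + 3) (by lia) le_rfl
  rw [prod_sq_sub_eq_prod_eval_derivative]
  simp only [show m + 3 - 1 = m + 2 by lia, show m + 3 - 2 = m + 1 by lia, Nat.cast_add,
    Nat.cast_ofNat, show (m : K) + 3 - 1 = m + 2 by ring, show (m : K) + 3 - 2 = m + 1 by ring]
    at hf he₁ he₂ ⊢
  obtain ⟨p, rfl⟩ : ∃ p, e₁ = 2 * p := ⟨e₁ / 2, by field_simp⟩
  obtain ⟨d, rfl⟩ : ∃ d, e₂ = p ^ 2 - d := ⟨p ^ 2 - e₂, by ring⟩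
  have hderiv := mul_prod_eval_derivative_quadrinomial_eq_evenBinomialSum hm3
    (by rw [he₁]; field_simp) (by rw [he₂]; field_simp) hf
  have hsum := sum_choose_eq_evenBinomialSum (k := m + 1) (ne_zero_of_dvd_ne_zero hfac <|
    Nat.cast_dvd_cast <| Nat.factorial_dvd_factorial (by lia)) a (4 * b * (p ^ 2 - d)) p d
  rw [show ((m + 1 : ℕ) : K) + 1 = m + 2 by push_cast; ring] at hsum
  rw [(eq_inv_mul_iff_mul_eq₀ hm3).2 hderiv,
    mul_div_cancel_left₀ p h2, sub_sub_cancel, hsum, mul_pow _ c, pow_add c m 2]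
  field_simp
  ring

/-- **Discriminant of `x^n + a x^{n-1} + b x^{n-2} + c`** (Corollary 3.3).
For a monic polynomial `f` over `ℂ` with roots `ξ₁, …, ξ_n` (with multiplicity),
the discriminant is `∏_{i<j} (ξ i - ξ j)^2`. -/
theorem discriminant_quadrinomial_x_pow_n_add_ax_pow_n_sub_one_add_bx_pow_n_sub_two
    (n : ℕ) (hn : 3 < n) (a b c : ℂ) (habc : a * b * c ≠ 0)
    (e₁ e₂ : ℂ)
    (he₁ : e₁ = -(((n : ℂ) - 1) * a) / (((n : ℂ) - 2) * b))
    (he₂ : e₂ = (n : ℂ) / (((n : ℂ) - 2) * b))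
    (ξ : Fin n → ℂ)
    (hf : (X ^ n + C a * X ^ (n - 1) + C b * X ^ (n - 2) + C c : ℂ[X])
        = ∏ i : Fin n, (X - C (ξ i))) :
    (∏ p ∈ Finset.univ.filter (fun p : Fin n × Fin n => p.1 < p.2),
        (ξ p.1 - ξ p.2) ^ 2)
      = (-1 : ℂ) ^ (n * (n - 1) / 2) * (n : ℂ)⁻¹
          * (((n : ℂ) - 2) * b * c) ^ (n - 1)
          * ((n : ℂ) ^ 2 * e₂ ^ (n - 1)
            + (4 * b ^ 2 * e₂ + 2 * a * b * e₁ + a ^ 2) / c ^ 2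
            + (1 + (-1 : ℂ) ^ (n - 1)) * (a * (n : ℂ) / c)
                * ((e₁ / 2) ^ 2 - e₂) ^ ((n - 1) / 2)
            + ((n : ℂ) / c) * ∑ i ∈ Finset.range ((n - 2) / 2 + 1),
                (4 * b * e₂ + ((n : ℂ) - 1) / ((n : ℂ) - 1 - 2 * (i : ℂ)) * a * e₁)
                  * (Nat.choose (n - 2) (2 * i) : ℂ)
                  * (e₁ / 2) ^ (n - 2 - 2 * i)
                  * ((e₁ / 2) ^ 2 - e₂) ^ i) := by
  exact discriminant_quadrinomial_x_pow_n_add_ax_pow_n_sub_one_add_bx_pow_n_sub_two_general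
    n hn.le (Nat.cast_ne_zero.2 n.factorial_ne_zero) a b c
    (right_ne_zero_of_mul (left_ne_zero_of_mul habc)) (right_ne_zero_of_mul habc) e₁ e₂ he₁ he₂ ξ hf
end
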